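/- Let C be a braided category with braiding σ, and let x be a transparent object of C admitting a right dual x^∨ (an exact pairing with coevaluation 𝟙 ⟶ x ⊗ x^∨ and evaluation x^∨ ⊗ x ⟶ 𝟙). Then x^∨ is transparent: for every object y, the double braiding σ_{y,x^∨} ∘ σ_{x^∨,y} is the identity of x^∨ ⊗ y. -/

import Mathlib

open CategoryTheory MonoidalCategory

/-- An object `x` of a braided category is transparent (lies in the Müger center) if the
double braiding with every object `y` is the identity. -/
def Transparent {C : Type*} [Category C] [MonoidalCategory C] [BraidedCategory C]
    (x : C) : Prop :=
  ∀ y : C, (β_ x y).hom ≫ (β_ y x).hom = 𝟙 (x ⊗ y)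

/-- If `x` is a transparent object of a braided category and `xd` is a
right dual of `x` (an exact pairing with coevaluation `𝟙 ⟶ x ⊗ xd` and evaluation
`xd ⊗ x ⟶ 𝟙`), then `xd` is transparent. -/
theorem transparent_of_rightDual
    {C : Type*} [Category C] [MonoidalCategory C] [BraidedCategory C]
    (x xd : C) [ExactPairing x xd] (hx : Transparent x) :
    Transparent xd := by
  intro y
  have hb : (β_ y x).hom = (β_ x y).inv := by
    rw [← cancel_epi (β_ x y).hom, hx y, Iso.hom_inv_id]
  have h1 : (β_ xd y).hom ▷ x ≫ (α_ y xd x).hom ≫ y ◁ (ε_ x xd) ≫ (ρ_ y).hom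
      = (α_ xd y x).hom ≫ xd ◁ (β_ x y).inv ≫ (α_ xd x y).inv ≫ (ε_ x xd) ▷ y ≫ (λ_ y).hom := by
    have h := BraidedCategory.braiding_naturality_left (ε_ x xd) y
    rw [BraidedCategory.braiding_tensor_left_hom, braiding_tensorUnit_left] at h
    have h' : (ε_ x xd) ▷ y ≫ (λ_ y).hom = (α_ xd x y).hom ≫ xd ◁ (β_ x y).hom ≫
        (α_ xd y x).inv ≫ (β_ xd y).hom ▷ x ≫ (α_ y xd x).hom ≫ y ◁ (ε_ x xd) ≫ (ρ_ y).hom := by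
      have := congrArg (· ≫ (ρ_ y).hom) h
      simpa using this
    rw [h']
    simp
  have h2 : (β_ y xd).inv ▷ x ≫ (α_ y xd x).hom ≫ y ◁ (ε_ x xd) ≫ (ρ_ y).hom
      = (α_ xd y x).hom ≫ xd ◁ (β_ y x).hom ≫ (α_ xd x y).inv ≫ (ε_ x xd) ▷ y ≫ (λ_ y).hom := by
    have h := BraidedCategory.braiding_naturality_right y (ε_ x xd)
    rw [BraidedCategory.braiding_tensor_right_hom, braiding_tensorUnit_right] at h
    have h' : y ◁ (ε_ x xd) ≫ (ρ_ y).hom = (α_ y xd x).inv ≫ (β_ y xd).hom ▷ x ≫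
        (α_ xd y x).hom ≫ xd ◁ (β_ y x).hom ≫ (α_ xd x y).inv ≫ (ε_ x xd) ▷ y ≫ (λ_ y).hom := by
      have := congrArg (· ≫ (λ_ y).hom) h
      simpa using this
    rw [h']
    simp
  have h3 : (β_ xd y).hom = (β_ y xd).inv := by
    apply (tensorRightHomEquiv (xd ⊗ y) x xd y).symm.injective
    simp only [tensorRightHomEquiv, Equiv.coe_fn_symm_mk]
    rw [h1, h2, hb]
  rw [h3, Iso.inv_hom_id]
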